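/- Let (u, u^[1]) and (v, v^[1]) be pairs of functions ℝ → ℂ such that u(x) = u(c) + ∫_c^x u^[1](t)/p̄(t) dt and u^[1](x) = u^[1](c) + ∫_{(c,x]} h_u(t) dσ_κ(t) for all c, x ∈ ℝ with h_u locally dσ_κ-integrable, and similarly for (v, v^[1]) with density h_v. Then for all x₁ ≤ x₂, W(u,v)(x₂) − W(u,v)(x₁) = ∫_{(x₁,x₂]} (u(t)·h_v(t) − v(t)·h_u(t)) dσ_κ(t) (Lagrange identity; equivalently, the Wronskian is locally absolutely continuous with respect to dσ_κ with Radon–Nikodym derivative u·h_v − v·h_u). -/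

import Mathlib

open MeasureTheory Set Filter
open scoped ENNReal NNReal Classical

/-- Forward shift of a time scale. -/
noncomputable def tsSigma (T : Set ℝ) (t : ℝ) : ℝ :=
  if ({s | s ∈ T ∧ t < s}).Nonempty then sInf {s | s ∈ T ∧ t < s} else sSup T

/-- Backward shift of a time scale. -/
noncomputable def tsRho (T : Set ℝ) (t : ℝ) : ℝ :=
  if ({s | s ∈ T ∧ s < t}).Nonempty then sSup {s | s ∈ T ∧ s < t} else sInf T

/-- `𝕋_κ` : the time scale with the left endpoint removed if it is finite and right-scattered. -/
noncomputable def tsKappa (T : Set ℝ) : Set ℝ :=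
  if BddBelow T ∧ sInf T < tsSigma T (sInf T) then T \ {sInf T} else T

/-- Extension `p̄` of a function on `𝕋_κ` to all of `ℝ`. -/
noncomputable def extK (T : Set ℝ) (p : ℝ → ℂ) (t : ℝ) : ℂ :=
  if t ∈ tsKappa T then p t else p (tsSigma (tsKappa T) t)

/-- Coercion of a real-valued coefficient to a complex-valued one. -/
def cR (f : ℝ → ℝ) : ℝ → ℂ := fun t => (f t : ℂ)

/-- `(u, u^[1])` is an integrated pair with density `h` against the measure `μ = dσ_κ`. -/
def IsPair (T : Set ℝ) (μ : Measure ℝ) (p : ℝ → ℂ) (u u1 h : ℝ → ℂ) : Prop :=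
  ∀ c x : ℝ, c ≤ x →
    u x = u c + ∫ t in c..x, u1 t / extK T p t ∧
    u1 x = u1 c + ∫ t in Set.Ioc c x, h t ∂μ

/-- `(u, u^[1])` is a solution pair of `(ℓ - z) u = g`. -/
def IsSLSol (T : Set ℝ) (μ : Measure ℝ) (p r q : ℝ → ℂ) (z : ℂ) (g : ℝ → ℂ)
    (u u1 : ℝ → ℂ) : Prop :=
  IsPair T μ p u u1 (fun t => (q t - z * r t) * u t - r t * g t)

/-- Wronskian of two pairs. -/
def Wr (u u1 v v1 : ℝ → ℂ) (x : ℝ) : ℂ := u x * v1 x - u1 x * v x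

/-- The integrand `|u|² r` as an `ℝ≥0∞`-valued function. -/
noncomputable def sqWeight (r : ℝ → ℝ) (u : ℝ → ℂ) (t : ℝ) : ℝ≥0∞ :=
  ((‖u t‖₊ : ℝ≥0∞)) ^ 2 * ENNReal.ofReal (r t)

/-- `u` lies in `L²` near the left endpoint `a`. -/
def L2NearLeft (T : Set ℝ) (μ : Measure ℝ) (r : ℝ → ℝ) (u : ℝ → ℂ) : Prop :=
  ∀ c ∈ tsKappa T, ∫⁻ t in {t | (∃ s ∈ T, s < t) ∧ t ≤ c} ∩ tsKappa T, sqWeight r u t ∂μ < ∞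

/-- `u` lies in `L²` near the right endpoint `b`. -/
def L2NearRight (T : Set ℝ) (μ : Measure ℝ) (r : ℝ → ℝ) (u : ℝ → ℂ) : Prop :=
  ∀ c ∈ tsKappa T, ∫⁻ t in {t | c ≤ t ∧ ∃ s ∈ T, t < s} ∩ tsKappa T, sqWeight r u t ∂μ < ∞

/-- `ℓ` is in the limit-circle case at the left endpoint. -/
def LimitCircleLeft (T : Set ℝ) (μ : Measure ℝ) (p r q : ℝ → ℝ) : Prop :=
  ∀ z : ℂ, ∀ u u1 : ℝ → ℂ, IsSLSol T μ (cR p) (cR r) (cR q) z 0 u u1 → L2NearLeft T μ r u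

/-- `ℓ` is in the limit-point case at the left endpoint. -/
def LimitPointLeft (T : Set ℝ) (μ : Measure ℝ) (p r q : ℝ → ℝ) : Prop :=
  ∀ z : ℂ, ∃ u u1 : ℝ → ℂ, IsSLSol T μ (cR p) (cR r) (cR q) z 0 u u1 ∧ ¬ L2NearLeft T μ r u

/-- `ℓ` is in the limit-circle case at the right endpoint. -/
def LimitCircleRight (T : Set ℝ) (μ : Measure ℝ) (p r q : ℝ → ℝ) : Prop :=
  ∀ z : ℂ, ∀ u u1 : ℝ → ℂ, IsSLSol T μ (cR p) (cR r) (cR q) z 0 u u1 → L2NearRight T μ r u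

/-- `ℓ` is in the limit-point case at the right endpoint. -/
def LimitPointRight (T : Set ℝ) (μ : Measure ℝ) (p r q : ℝ → ℝ) : Prop :=
  ∀ z : ℂ, ∃ u u1 : ℝ → ℂ, IsSLSol T μ (cR p) (cR r) (cR q) z 0 u u1 ∧ ¬ L2NearRight T μ r u

/-- The action `ℓ u = (-h + q u)/r` of the differential expression on a pair with density `h`. -/
noncomputable def ellApply (r q : ℝ → ℝ) (h u : ℝ → ℂ) (t : ℝ) : ℂ :=
  (-h t + (q t : ℂ) * u t) / (r t : ℂ)

/-- Membership in `L²(𝕋_κ; r dσ_κ)`. -/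
def MemL2T (T : Set ℝ) (μ : Measure ℝ) (r : ℝ → ℝ) (u : ℝ → ℂ) : Prop :=
  ∫⁻ t in tsKappa T, sqWeight r u t ∂μ < ∞

/-- The pair `(u, u^[1])` with density `h` belongs to `D_ℓ²`. -/
def MemD2 (T : Set ℝ) (μ : Measure ℝ) (p r q : ℝ → ℝ) (u u1 h : ℝ → ℂ) : Prop :=
  LocallyIntegrable h μ ∧ IsPair T μ (cR p) u u1 h ∧ MemL2T T μ r u ∧
    MemL2T T μ r (ellApply r q h u)

/-- The filter `x ↓ a`, `x ∈ 𝕋`. -/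
noncomputable def leftLimFilter (T : Set ℝ) : Filter ℝ :=
  if BddBelow T then nhdsWithin (sInf T) T else Filter.atBot ⊓ Filter.principal T

/-- The filter `x ↑ b`, `x ∈ 𝕋`. -/
noncomputable def rightLimFilter (T : Set ℝ) : Filter ℝ :=
  if BddAbove T then nhdsWithin (sSup T) T else Filter.atTop ⊓ Filter.principal T

/-- The measure `r dσ_κ` on `𝕋_κ`, giving the Hilbert space `L²(𝕋_κ; r dσ_κ)`. -/
noncomputable def wM (T : Set ℝ) (μ : Measure ℝ) (r : ℝ → ℝ) : Measure ℝ :=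
  (μ.restrict (tsKappa T)).withDensity fun t => ENNReal.ofReal (r t)


/-!
Write `p̄ = p ∘ φ`, where `φ` sends `t` to the next point of `𝕋_κ` at or after `t`. Under the
monotone map `φ`, Lebesgue measure on the hull of `𝕋` is pushed forward to `dρ`: for `t` in the
hull, `φ t < d` and `t < ρ d` agree up to the single point `t = ρ d`. Since `φ` is constant on
either side of the hull, `1 / p̄` is therefore locally Lebesgue integrable.

Fubini's theorem on the triangle `t ≤ s` gives integration by parts for indefinite integrals `F`,
`G` against two different measures, the first without atoms. No left limits appear in it because `F`
is continuous. Applied to `u v^[1]` and to `v u^[1]`, it produces the same Lebesgue term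
`∫ u^[1] v^[1] / p̄` twice, and this term cancels in the Wronskian.
-/

section IndefiniteIntegral

variable {α E 𝕜 : Type*} [LinearOrder α] [MeasurableSpace α] {μ ν : Measure α}

/-- `F` is an indefinite integral of the density `f` against `μ`. Increments are taken over the
intervals `(c, x]`, so that an atom of `μ` at `x` counts in `F x`. -/
def IsIndefiniteIntegral [NormedAddCommGroup E] [NormedSpace ℝ E] (μ : Measure α) (f F : α → E) :
    Prop :=
  ∀ c x, c ≤ x → F x = F c + ∫ t in Ioc c x, f t ∂μ

/-- The kernel `f s * g t` on the triangle `t ≤ s`, whose two iterated integrals are compared to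
integrate by parts. -/
noncomputable def triangleKernel [Mul 𝕜] [Zero 𝕜] (f g : α → 𝕜) : α × α → 𝕜 :=
  {z | z.2 ≤ z.1}.indicator fun z => f z.1 * g z.2

variable [RCLike 𝕜] {f g F G : α → 𝕜} {a b s t : α}

section Order

variable [TopologicalSpace α] [OrderClosedTopology α] [OpensMeasurableSpace α]

theorem integral_triangleKernel_fst (f g : α → 𝕜) (s : α) :
    ∫ t, triangleKernel f g (s, t) ∂ν = f s * ∫ t in Iic s, g t ∂ν := by
  have hslice : (fun t => triangleKernel f g (s, t)) = (Iic s).indicator fun t => f s * g t := by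
    ext t
    simp [triangleKernel, indicator]
  rw [hslice, integral_indicator measurableSet_Iic, integral_const_mul]

theorem integral_triangleKernel_snd (f g : α → 𝕜) (t : α) :
    ∫ s, triangleKernel f g (s, t) ∂μ = (∫ s in Ici t, f s ∂μ) * g t := by
  have hslice : (fun s => triangleKernel f g (s, t)) = (Ici t).indicator fun s => f s * g t := by
    ext s
    simp [triangleKernel, indicator]
  rw [hslice, integral_indicator measurableSet_Ici, integral_mul_const]

theorem IsIndefiniteIntegral.eq_add_setIntegral_Iic (hG : IsIndefiniteIntegral ν g G)
    (hs : s ∈ Ioc a b) : G s = G a + ∫ t in Iic s, g t ∂ν.restrict (Ioc a b) := by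
  rw [Measure.restrict_restrict measurableSet_Iic, inter_comm, Ioc_inter_Iic, min_eq_right hs.2]
  exact hG a s hs.1.le

theorem IsIndefiniteIntegral.eq_sub_setIntegral_Ici [NullSingletonClass μ]
    (hF : IsIndefiniteIntegral μ f F) (ht : t ∈ Ioc a b) :
    F t = F b - ∫ s in Ici t, f s ∂μ.restrict (Ioc a b) := by
  have hinter : Ici t ∩ Ioc a b = Icc t b := by
    ext s
    exact ⟨fun h => ⟨h.1, h.2.2⟩, fun h => ⟨h.1, ht.1.trans_le h.1, h.2⟩⟩
  rw [Measure.restrict_restrict measurableSet_Ici, hinter, integral_Icc_eq_integral_Ioc]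
  exact eq_sub_of_add_eq (hF t b ht.2).symm

end Order

variable [TopologicalSpace α] [OrderClosedTopology α] [SecondCountableTopology α]
  [OpensMeasurableSpace α]

theorem integrable_triangleKernel (hf : Integrable f μ) (hg : Integrable g ν) :
    Integrable (triangleKernel f g) (μ.prod ν) :=
  (hf.mul_prod hg).indicator (measurableSet_le measurable_snd measurable_fst)

variable [SFinite ν]

theorem integrable_mul_setIntegral_Iic (hf : Integrable f μ) (hg : Integrable g ν) :
    Integrable (fun s => f s * ∫ t in Iic s, g t ∂ν) μ := by
  simpa only [integral_triangleKernel_fst] using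
    (integrable_triangleKernel hf hg).integral_prod_left

theorem integrable_setIntegral_Ici_mul [SFinite μ] (hf : Integrable f μ) (hg : Integrable g ν) :
    Integrable (fun t => (∫ s in Ici t, f s ∂μ) * g t) ν := by
  simpa only [integral_triangleKernel_snd] using
    (integrable_triangleKernel hf hg).integral_prod_right

theorem integral_mul_setIntegral_Iic [SFinite μ] (hf : Integrable f μ) (hg : Integrable g ν) :
    ∫ s, f s * ∫ t in Iic s, g t ∂ν ∂μ = ∫ t, (∫ s in Ici t, f s ∂μ) * g t ∂ν := by
  simpa only [integral_triangleKernel_fst, integral_triangleKernel_snd] using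
    integral_integral_swap (f := fun s t => triangleKernel f g (s, t))
      (integrable_triangleKernel hf hg)

namespace IsIndefiniteIntegral

theorem integrableOn_mul_right (hG : IsIndefiniteIntegral ν g G)
    (hf : IntegrableOn f (Ioc a b) μ) (hg : IntegrableOn g (Ioc a b) ν) :
    IntegrableOn (fun s => f s * G s) (Ioc a b) μ := by
  refine ((hf.mul_const (G a)).add (integrable_mul_setIntegral_Iic hf hg)).congr ?_
  filter_upwards [ae_restrict_mem measurableSet_Ioc] with s hs
  rw [Pi.add_apply, ← mul_add, ← hG.eq_add_setIntegral_Iic hs]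

theorem integrableOn_mul_left [SFinite μ] [NullSingletonClass μ] (hF : IsIndefiniteIntegral μ f F)
    (hf : IntegrableOn f (Ioc a b) μ) (hg : IntegrableOn g (Ioc a b) ν) :
    IntegrableOn (fun t => F t * g t) (Ioc a b) ν := by
  refine ((hg.const_mul (F b)).sub (integrable_setIntegral_Ici_mul hf hg)).congr ?_
  filter_upwards [ae_restrict_mem measurableSet_Ioc] with t ht
  rw [Pi.sub_apply, ← sub_mul, ← hF.eq_sub_setIntegral_Ici ht]

theorem mul_sub_mul [SFinite μ] [NullSingletonClass μ] (hF : IsIndefiniteIntegral μ f F)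
    (hG : IsIndefiniteIntegral ν g G) (hab : a ≤ b) (hf : IntegrableOn f (Ioc a b) μ)
    (hg : IntegrableOn g (Ioc a b) ν) :
    F b * G b - F a * G a = ∫ t in Ioc a b, F t * g t ∂ν + ∫ s in Ioc a b, f s * G s ∂μ := by
  have hFg : ∫ t in Ioc a b, F t * g t ∂ν = F b * ∫ t in Ioc a b, g t ∂ν -
      ∫ t in Ioc a b, (∫ s in Ici t, f s ∂μ.restrict (Ioc a b)) * g t ∂ν := by
    rw [← integral_const_mul,
      ← integral_sub (hg.const_mul (F b)) (integrable_setIntegral_Ici_mul hf hg)]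
    refine setIntegral_congr_fun measurableSet_Ioc fun t ht => ?_
    rw [hF.eq_sub_setIntegral_Ici ht, sub_mul]
  have hfG : ∫ s in Ioc a b, f s * G s ∂μ = (∫ s in Ioc a b, f s ∂μ) * G a +
      ∫ s in Ioc a b, f s * ∫ t in Iic s, g t ∂ν.restrict (Ioc a b) ∂μ := by
    rw [← integral_mul_const,
      ← integral_add (hf.mul_const (G a)) (integrable_mul_setIntegral_Iic hf hg)]
    refine setIntegral_congr_fun measurableSet_Ioc fun s hs => ?_
    rw [hG.eq_add_setIntegral_Iic hs, mul_add]
  rw [hFg, hfG, integral_mul_setIntegral_Iic hf hg, hF a b hab, hG a b hab]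
  ring

end IsIndefiniteIntegral

end IndefiniteIntegral

section LocalIntegrability

theorem integrableOn_of_forall_mem_eq {α E : Type*} [MeasurableSpace α] [NormedAddCommGroup E]
    {μ : Measure α} {f : α → E} {s : Set α} (hs : MeasurableSet s) (hμs : μ s ≠ ∞)
    (hf : ∀ x ∈ s, ∀ y ∈ s, f x = f y) : IntegrableOn f s μ := by
  obtain rfl | ⟨x, hx⟩ := s.eq_empty_or_nonempty
  · exact integrableOn_empty
  · exact (integrableOn_const hμs (C := f x)).congr_fun (fun y hy => hf x hx y hy) hs

theorem integrableOn_Ioc_of_locallyIntegrable {α E : Type*} [Preorder α] [TopologicalSpace α]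
    [CompactIccSpace α] [MeasurableSpace α] [NormedAddCommGroup E] {μ : Measure α} {f : α → E}
    (hf : LocallyIntegrable f μ) (a b : α) : IntegrableOn f (Ioc a b) μ :=
  (hf.integrableOn_isCompact isCompact_Icc).mono_set Ioc_subset_Icc_self

theorem locallyIntegrable_comp_of_monotone {α β E : Type*} [LinearOrder α] [TopologicalSpace α]
    [OrderTopology α] [LocallyCompactSpace α] [Nonempty α] [MeasurableSpace α]
    [Preorder β] [TopologicalSpace β] [OrderClosedTopology β] [CompactIccSpace β]
    [MeasurableSpace β] [OpensMeasurableSpace β] [NormedAddCommGroup E]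
    {μ : Measure α} {ν : Measure β} {φ : α → β} {f : β → E} (hmono : Monotone φ)
    (hφ : MeasurePreserving φ μ ν) (hf : LocallyIntegrable f ν) : LocallyIntegrable (f ∘ φ) μ := by
  refine locallyIntegrable_iff.2 fun k hk => ?_
  obtain ⟨a, ha⟩ := hk.bddBelow
  obtain ⟨b, hb⟩ := hk.bddAbove
  have hpre : IntegrableOn (f ∘ φ) (φ ⁻¹' Icc (φ a) (φ b)) μ :=
    (hφ.restrict_preimage measurableSet_Icc).integrable_comp_of_integrable
      (hf.integrableOn_isCompact isCompact_Icc)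
  exact hpre.mono_set fun t ht => ⟨hmono (ha ht), hmono (hb ht)⟩

theorem isLocallyFiniteMeasure_of_measure_Ioc_lt_top {α : Type*} [LinearOrder α]
    [TopologicalSpace α] [OrderTopology α] [NoMinOrder α] [NoMaxOrder α] [MeasurableSpace α]
    {μ : Measure α} (hμ : ∀ c d, c ≤ d → μ (Ioc c d) < ∞) : IsLocallyFiniteMeasure μ where
  finiteAtNhds x := by
    obtain ⟨c, hc⟩ := exists_lt x
    obtain ⟨d, hd⟩ := exists_gt x
    exact ⟨Ioc c d, Ioc_mem_nhds hc hd, hμ c d (hc.trans hd).le⟩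

end LocalIntegrability

section NextPoint

variable {α : Type*} [ConditionallyCompleteLinearOrder α] {K : Set α} {s t : α}

/-- The first point of `K` at or after `t`, or the supremum of `K` if there is none: the map `φ`
with `p̄ = p ∘ φ` for `K = 𝕋_κ`. It equals `t` itself, not `σ_κ(t)`, when `t ∈ K`. -/
noncomputable def nextPoint (K : Set α) (t : α) : α :=
  if (K ∩ Ici t).Nonempty then sInf (K ∩ Ici t) else sSup K

theorem bddBelow_inter_Ici (K : Set α) (t : α) : BddBelow (K ∩ Ici t) :=
  bddBelow_Ici.mono inter_subset_right

theorem nextPoint_of_mem (ht : t ∈ K) : nextPoint K t = t := by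
  rw [nextPoint, if_pos ⟨t, ht, self_mem_Ici⟩]
  exact IsLeast.csInf_eq ⟨⟨ht, self_mem_Ici⟩, fun _ hs => hs.2⟩

theorem nextPoint_le (hs : s ∈ K) (hts : t ≤ s) : nextPoint K t ≤ s := by
  rw [nextPoint, if_pos ⟨s, hs, hts⟩]
  exact csInf_le (bddBelow_inter_Ici K t) ⟨hs, hts⟩

theorem le_nextPoint (hs : s ∈ K) (hts : t ≤ s) : t ≤ nextPoint K t := by
  rw [nextPoint, if_pos ⟨s, hs, hts⟩]
  exact le_csInf ⟨s, hs, hts⟩ fun _ h => h.2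

theorem nextPoint_mem_closure [TopologicalSpace α] [OrderTopology α] (hs : s ∈ K)
    (hts : t ≤ s) : nextPoint K t ∈ closure K := by
  rw [nextPoint, if_pos ⟨s, hs, hts⟩]
  exact closure_mono inter_subset_left
    (csInf_mem_closure ⟨s, hs, hts⟩ (bddBelow_inter_Ici K t))

theorem nextPoint_of_notMem_lowerClosure (ht : t ∉ lowerClosure K) : nextPoint K t = sSup K :=
  if_neg fun ⟨s, hs, hts⟩ => ht ⟨s, hs, hts⟩

theorem nextPoint_of_mem_lowerBounds (ht : t ∈ lowerBounds K) :
    nextPoint K t = if K.Nonempty then sInf K else sSup K := by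
  have hset : K ∩ Ici t = K := inter_eq_left.2 fun _ hs => ht hs
  rw [nextPoint, hset]

theorem monotone_nextPoint (K : Set α) : Monotone (nextPoint K) := by
  intro t t' htt'
  by_cases ht' : t' ∈ lowerClosure K
  · obtain ⟨s, hs, ht's⟩ := ht'
    rw [nextPoint, nextPoint, if_pos ⟨s, hs, htt'.trans ht's⟩, if_pos ⟨s, hs, ht's⟩]
    exact csInf_le_csInf (bddBelow_inter_Ici K t) ⟨s, hs, ht's⟩
      (inter_subset_inter_right K (Ici_subset_Ici.2 htt'))
  rw [nextPoint_of_notMem_lowerClosure ht']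
  by_cases ht : t ∈ lowerClosure K
  · obtain ⟨s, hs, hts⟩ := ht
    have hbdd : BddAbove K := ⟨t', fun r hr => le_of_not_ge fun h => ht' ⟨r, hr, h⟩⟩
    exact (nextPoint_le hs hts).trans (le_csSup hbdd hs)
  · exact (nextPoint_of_notMem_lowerClosure ht).le

theorem nextPoint_eq_tsSigma {K : Set ℝ} {t : ℝ} (ht : t ∉ K) : nextPoint K t = tsSigma K t := by
  have hset : K ∩ Ici t = {s | s ∈ K ∧ t < s} := by
    ext s
    refine and_congr_right fun hs => ⟨fun h => lt_of_le_of_ne h ?_, le_of_lt⟩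
    rintro rfl
    exact ht hs
  rw [nextPoint, tsSigma, hset]

theorem extK_eq_comp_nextPoint (T : Set ℝ) (p : ℝ → ℂ) :
    extK T p = p ∘ nextPoint (tsKappa T) := by
  ext t
  rw [extK, Function.comp_apply]
  split_ifs with ht
  · rw [nextPoint_of_mem ht]
  · rw [nextPoint_eq_tsSigma ht]

end NextPoint

section TimeScale

variable {T : Set ℝ} {c d r s t : ℝ}

theorem tsKappa_subset (T : Set ℝ) : tsKappa T ⊆ T := by
  unfold tsKappa
  split_ifs
  exacts [sdiff_subset, Subset.rfl]

theorem mem_tsKappa_of_lt (hr : r ∈ T) (hs : s ∈ T) (hrs : r < s) : s ∈ tsKappa T := by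
  unfold tsKappa
  split_ifs with hT
  · exact ⟨hs, ((csInf_le hT.1 hr).trans_lt hrs).ne'⟩
  · exact hs

theorem le_tsRho (hs : s ∈ T) (hsd : s < d) : s ≤ tsRho T d := by
  rw [tsRho, if_pos ⟨s, hs, hsd⟩]
  exact le_csSup ⟨d, fun _ h => h.2.le⟩ ⟨hs, hsd⟩

theorem exists_mem_Ioo_of_lt_tsRho (hr : r ∈ T) (hrt : r < t) (ht : t < tsRho T d) :
    ∃ s ∈ T, s ∈ Ioo t d := by
  unfold tsRho at ht
  split_ifs at ht with hd
  · obtain ⟨s, ⟨hs, hsd⟩, hts⟩ := exists_lt_of_lt_csSup hd ht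
    exact ⟨s, hs, hts, hsd⟩
  · have hbdd : BddBelow T := ⟨d, fun s hs => le_of_not_gt fun h => hd ⟨s, hs, h⟩⟩
    exact absurd (csInf_le hbdd hr) (hrt.trans ht).not_ge

theorem exists_mem_lt_of_tsRho_lt (hne : T.Nonempty) (ht : tsRho T c < t) : ∃ r ∈ T, r < t := by
  by_cases hc : {s | s ∈ T ∧ s < c}.Nonempty
  · obtain ⟨r, hr, hrc⟩ := hc
    exact ⟨r, hr, (le_tsRho hr hrc).trans_lt ht⟩
  · rw [tsRho, if_neg hc] at ht
    exact exists_lt_of_csInf_lt hne ht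

/-- The smallest interval containing `T`, without its left endpoint. Leaving that point out ensures
that all points of `T` to the right of a point of the hull belong to `tsKappa T`. -/
def tsHull (T : Set ℝ) : Set ℝ := lowerClosure T \ lowerBounds T

theorem mem_tsHull_iff : t ∈ tsHull T ↔ (∃ s ∈ T, t ≤ s) ∧ ∃ r ∈ T, r < t := by
  simp only [tsHull, Set.mem_sdiff, SetLike.mem_coe, mem_lowerClosure, mem_lowerBounds, not_forall,
    not_le, exists_prop]

theorem measurableSet_lowerClosure (T : Set ℝ) : MeasurableSet (lowerClosure T : Set ℝ) :=
  (lowerClosure T).lower.ordConnected.measurableSet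

theorem measurableSet_lowerBounds (T : Set ℝ) : MeasurableSet (lowerBounds T) :=
  OrdConnected.measurableSet ⟨fun _ _ _ hy _ hz _ hs => hz.2.trans (hy hs)⟩

theorem exists_mem_tsKappa_of_mem_tsHull (ht : t ∈ tsHull T) : ∃ s ∈ tsKappa T, t ≤ s := by
  obtain ⟨⟨s, hs, hts⟩, r, hr, hrt⟩ := mem_tsHull_iff.1 ht
  exact ⟨s, mem_tsKappa_of_lt hr hs (hrt.trans_le hts), hts⟩

theorem le_tsRho_of_nextPoint_lt (hcl : IsClosed T) (ht : t ∈ tsHull T)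
    (htd : nextPoint (tsKappa T) t < d) : t ≤ tsRho T d := by
  obtain ⟨s, hs, hts⟩ := exists_mem_tsKappa_of_mem_tsHull ht
  have hmem : nextPoint (tsKappa T) t ∈ T :=
    closure_minimal (tsKappa_subset T) hcl (nextPoint_mem_closure hs hts)
  exact (le_nextPoint hs hts).trans (le_tsRho hmem htd)

theorem nextPoint_lt_of_lt_tsRho (ht : t ∈ tsHull T) (htd : t < tsRho T d) :
    nextPoint (tsKappa T) t < d := by
  obtain ⟨-, r, hr, hrt⟩ := mem_tsHull_iff.1 ht
  obtain ⟨s, hs, hts, hsd⟩ := exists_mem_Ioo_of_lt_tsRho hr hrt htd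
  exact (nextPoint_le (mem_tsKappa_of_lt hr hs (hrt.trans hts)) hts.le).trans_lt hsd

theorem preimage_nextPoint_Ico_inter_tsHull_subset (hcl : IsClosed T) (c d : ℝ) :
    nextPoint (tsKappa T) ⁻¹' Ico c d ∩ tsHull T ⊆ Icc (tsRho T c) (tsRho T d) :=
  fun _ ⟨⟨hc, hd⟩, ht⟩ =>
    ⟨le_of_not_gt fun h => hc.not_gt (nextPoint_lt_of_lt_tsRho ht h),
      le_tsRho_of_nextPoint_lt hcl ht hd⟩

theorem Ioo_tsRho_subset (hne : T.Nonempty) (hcl : IsClosed T) (c d : ℝ) :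
    Ioo (tsRho T c) (tsRho T d) ⊆ nextPoint (tsKappa T) ⁻¹' Ico c d ∩ tsHull T := by
  rintro t ⟨hc, hd⟩
  obtain ⟨r, hr, hrt⟩ := exists_mem_lt_of_tsRho_lt hne hc
  obtain ⟨s, hs, hts, -⟩ := exists_mem_Ioo_of_lt_tsRho hr hrt hd
  have ht : t ∈ tsHull T := mem_tsHull_iff.2 ⟨⟨s, hs, hts.le⟩, r, hr, hrt⟩
  exact ⟨⟨le_of_not_gt fun h => hc.not_ge (le_tsRho_of_nextPoint_lt hcl ht h),
    nextPoint_lt_of_lt_tsRho ht hd⟩, ht⟩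

theorem measurePreserving_nextPoint (hne : T.Nonempty) (hcl : IsClosed T) {ν : Measure ℝ}
    (hν : ∀ c d : ℝ, c ≤ d → ν (Ico c d) = ENNReal.ofReal (tsRho T d - tsRho T c)) :
    MeasurePreserving (nextPoint (tsKappa T)) (volume.restrict (tsHull T)) ν := by
  have hmeas : Measurable (nextPoint (tsKappa T)) := (monotone_nextPoint _).measurable
  refine ⟨hmeas, (Measure.ext_of_Ico' _ _ (fun c d hcd => ?_) fun c d hcd => ?_).symm⟩
  · rw [hν c d hcd.le]
    exact ENNReal.ofReal_ne_top
  · rw [Measure.map_apply hmeas measurableSet_Ico,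
      Measure.restrict_apply (hmeas measurableSet_Ico), hν c d hcd.le]
    apply le_antisymm
    · rw [← Real.volume_Ioo]
      exact measure_mono (Ioo_tsRho_subset hne hcl c d)
    · rw [← Real.volume_Icc]
      exact measure_mono (preimage_nextPoint_Ico_inter_tsHull_subset hcl c d)

theorem tsHull_union_union (T : Set ℝ) :
    tsHull T ∪ (lowerClosure T : Set ℝ)ᶜ ∪ lowerBounds T = univ := by
  ext t
  simp only [tsHull, mem_union, Set.mem_sdiff, mem_compl_iff, mem_univ, iff_true]
  tauto

theorem locallyIntegrable_comp_nextPoint {E : Type*} [NormedAddCommGroup E] (hne : T.Nonempty)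
    (hcl : IsClosed T) {ν : Measure ℝ}
    (hν : ∀ c d : ℝ, c ≤ d → ν (Ico c d) = ENNReal.ofReal (tsRho T d - tsRho T c))
    {f : ℝ → E} (hf : LocallyIntegrable f ν) :
    LocallyIntegrable (f ∘ nextPoint (tsKappa T)) := by
  refine locallyIntegrable_iff.2 fun k hk => ?_
  have hfin (s : Set ℝ) : volume (k ∩ s) ≠ ∞ :=
    ((measure_mono inter_subset_left).trans_lt hk.measure_lt_top).ne
  have hull : IntegrableOn (f ∘ nextPoint (tsKappa T)) (k ∩ tsHull T) := by
    have hcomp : LocallyIntegrable (f ∘ nextPoint (tsKappa T)) (volume.restrict (tsHull T)) :=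
      locallyIntegrable_comp_of_monotone (monotone_nextPoint _)
        (measurePreserving_nextPoint hne hcl hν) hf
    rw [IntegrableOn, ← Measure.restrict_restrict hk.measurableSet]
    exact hcomp.integrableOn_isCompact hk
  have above : IntegrableOn (f ∘ nextPoint (tsKappa T)) (k ∩ (lowerClosure T : Set ℝ)ᶜ) := by
    refine integrableOn_of_forall_mem_eq
      (hk.measurableSet.inter (measurableSet_lowerClosure T).compl) (hfin _) fun x hx y hy => ?_
    have hsub := lowerClosure_mono (tsKappa_subset T)
    rw [Function.comp_apply, Function.comp_apply,
      nextPoint_of_notMem_lowerClosure fun h => hx.2 (hsub h),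
      nextPoint_of_notMem_lowerClosure fun h => hy.2 (hsub h)]
  have below : IntegrableOn (f ∘ nextPoint (tsKappa T)) (k ∩ lowerBounds T) := by
    refine integrableOn_of_forall_mem_eq
      (hk.measurableSet.inter (measurableSet_lowerBounds T)) (hfin _) fun x hx y hy => ?_
    have hsub := lowerBounds_mono_set (tsKappa_subset T)
    rw [Function.comp_apply, Function.comp_apply, nextPoint_of_mem_lowerBounds (hsub hx.2),
      nextPoint_of_mem_lowerBounds (hsub hy.2)]
  rw [← inter_univ k, ← tsHull_union_union T, inter_union_distrib_left, inter_union_distrib_left]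
  exact (hull.union above).union below

end TimeScale

namespace IsPair

variable {T : Set ℝ} {μ : Measure ℝ} {p u u1 h : ℝ → ℂ}

theorem isIndefiniteIntegral_fst (hpair : IsPair T μ p u u1 h) :
    IsIndefiniteIntegral volume (fun t => 1 / extK T p t * u1 t) u := by
  intro c x hcx
  simp only [one_div_mul_eq_div]
  rw [← intervalIntegral.integral_of_le hcx]
  exact (hpair c x hcx).1

theorem isIndefiniteIntegral_snd (hpair : IsPair T μ p u u1 h) : IsIndefiniteIntegral μ h u1 :=
  fun c x hcx => (hpair c x hcx).2

end IsPair

theorem lagrange_identity_wronskian_general {T : Set ℝ} (hne : T.Nonempty) (hcl : IsClosed T)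
    {μ ν : Measure ℝ} [SFinite μ]
    (hν : ∀ c d : ℝ, c ≤ d → ν (Ico c d) = ENNReal.ofReal (tsRho T d - tsRho T c))
    {p : ℝ → ℂ} (hp : LocallyIntegrable (fun t => 1 / p t) ν) {u u1 hu v v1 hv : ℝ → ℂ}
    (hu' : LocallyIntegrable hu μ) (hv' : LocallyIntegrable hv μ)
    (hpu : IsPair T μ p u u1 hu) (hpv : IsPair T μ p v v1 hv) {x₁ x₂ : ℝ} (hx : x₁ ≤ x₂) :
    Wr u u1 v v1 x₂ - Wr u u1 v v1 x₁ =
      ∫ t in Ioc x₁ x₂, (u t * hv t - v t * hu t) ∂μ := by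
  have hw : LocallyIntegrable (fun t => 1 / extK T p t) := by
    rw [extK_eq_comp_nextPoint]
    exact locallyIntegrable_comp_nextPoint hne hcl hν hp
  have hwI := integrableOn_Ioc_of_locallyIntegrable hw x₁ x₂
  have huI := integrableOn_Ioc_of_locallyIntegrable hu' x₁ x₂
  have hvI := integrableOn_Ioc_of_locallyIntegrable hv' x₁ x₂
  have hwu := hpu.isIndefiniteIntegral_snd.integrableOn_mul_right hwI huI
  have hwv := hpv.isIndefiniteIntegral_snd.integrableOn_mul_right hwI hvI
  have huv := hpu.isIndefiniteIntegral_fst.mul_sub_mul hpv.isIndefiniteIntegral_snd hx hwu hvI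
  have hvu := hpv.isIndefiniteIntegral_fst.mul_sub_mul hpu.isIndefiniteIntegral_snd hx hwv huI
  rw [integral_sub (hpu.isIndefiniteIntegral_fst.integrableOn_mul_left hwu hvI)
    (hpv.isIndefiniteIntegral_fst.integrableOn_mul_left hwv huI)]
  simp only [Wr]
  simp only [mul_right_comm _ (v1 _) (u1 _)] at hvu
  linear_combination huv - hvu

/-- Lagrange identity: for two integrated pairs `(u, u^[1])`, `(v, v^[1])` with densities
`h_u`, `h_v` against `dσ_κ`, the Wronskian satisfies
`W(u,v)(x₂) - W(u,v)(x₁) = ∫_{(x₁,x₂]} (u h_v - v h_u) dσ_κ`. -/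
theorem lagrange_identity_wronskian
    (T : Set ℝ) (hne : T.Nonempty) (hcl : IsClosed T)
    (hfive : ∃ s : Finset ℝ, ↑s ⊆ T ∧ 5 ≤ s.card)
    (μ ν : Measure ℝ)
    (hμ : ∀ c d : ℝ, c ≤ d →
      μ (Set.Ioc c d) = ENNReal.ofReal (tsSigma (tsKappa T) d - tsSigma (tsKappa T) c))
    (hν : ∀ c d : ℝ, c ≤ d → ν (Set.Ico c d) = ENNReal.ofReal (tsRho T d - tsRho T c))
    (p : ℝ → ℂ) (hp : LocallyIntegrable (fun t => 1 / p t) ν)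
    (u u1 hu v v1 hv : ℝ → ℂ)
    (hu' : LocallyIntegrable hu μ) (hv' : LocallyIntegrable hv μ)
    (hpu : IsPair T μ p u u1 hu) (hpv : IsPair T μ p v v1 hv) :
    ∀ x₁ x₂ : ℝ, x₁ ≤ x₂ →
      Wr u u1 v v1 x₂ - Wr u u1 v v1 x₁ =
        ∫ t in Set.Ioc x₁ x₂, (u t * hv t - v t * hu t) ∂μ := by
  have : IsLocallyFiniteMeasure μ := isLocallyFiniteMeasure_of_measure_Ioc_lt_top
    fun c d hcd => (hμ c d hcd).trans_lt ENNReal.ofReal_lt_top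
  exact fun _ _ => lagrange_identity_wronskian_general hne hcl hν hp hu' hv' hpu hpv
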